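/- There exists a finite set S of 319 points in ℝ² and two points p, q ∈ S with dist(p,q) = 7/3, such that the unit-distance graph on S is 4-colorable and every proper 4-coloring c of this graph satisfies c p ≠ c q (i.e., {p,q} is a non-monochromatic pair at distance 7/3). -/

import Mathlib

/-!
Every point of the graph is a combination of four fixed vectors with natural coefficients, so unit
distances in it are integer equations. On the lattice of all integer combinations, sending a point
with first coordinate `(a + b√33) / 12` to `⌊(a + b) / 2⌋` modulo `4` is a proper coloring, because
`a + b` is even and not divisible by `8` for each lattice vector of length one.

Conversely, suppose that a proper `4`-coloring gives `p` and `q` the same color. Up to a permutation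
of the colors, it is prescribed on `p`, `q` and a unit triangle through `p`, and an exhaustive
search, always branching at an uncolored vertex with the fewest remaining colors, finds no such
coloring. Ties are broken by the order of the list of vertices, which was optimized to keep the
search short.
-/

section Lattice

/-- The Euclidean plane. -/
abbrev Plane := EuclideanSpace ℝ (Fin 2)

/-- The point `((a + b√33) / 12, (c√3 + d√11) / 12)` of the plane, for `z = (a, b, c, d)`. The
graph lives on the lattice of all these points. -/
noncomputable def latticePoint : ℤ × ℤ × ℤ × ℤ →+ Plane :=
  AddMonoidHom.mk' (fun z => !₂[(z.1 + z.2.1 * √33) / 12, (z.2.2.1 * √3 + z.2.2.2 * √11) / 12])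
    fun z w => by
      ext i
      fin_cases i <;>
        simp only [Prod.fst_add, Prod.snd_add, Int.cast_add, Fin.zero_eta, Fin.mk_one,
          Matrix.cons_val_zero, Matrix.cons_val_one, Matrix.cons_val_fin_one, PiLp.add_apply] <;>
        ring

theorem intCast_add_intCast_mul_eq_zero_iff {x : ℝ} (hx : Irrational x) {m n : ℤ} :
    (m : ℝ) + n * x = 0 ↔ m = 0 ∧ n = 0 := by
  refine ⟨fun h => ?_, by rintro ⟨rfl, rfl⟩; simp⟩
  obtain rfl : n = 0 := by
    by_contra hn
    exact ((hx.intCast_mul hn).intCast_add m).ne_zero h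
  simpa using h

theorem irrational_sqrt_thirtyThree : Irrational √33 :=
  irrational_sqrt_ofNat_iff.mpr (by decide +kernel)

theorem norm_latticePoint_sq (a b c d : ℤ) :
    ‖latticePoint (a, b, c, d)‖ ^ 2 =
      ((a ^ 2 + 33 * b ^ 2 + 3 * c ^ 2 + 11 * d ^ 2 : ℤ) +
        (2 * (a * b + c * d) : ℤ) * √33) / 144 := by
  have h : √3 * √11 = √33 := by rw [← Real.sqrt_mul (by norm_num)]; norm_num
  have h₃ : √3 ^ 2 = 3 := Real.sq_sqrt (by norm_num)
  have h₁₁ : √11 ^ 2 = 11 := Real.sq_sqrt (by norm_num)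
  rw [EuclideanSpace.norm_sq_eq]
  simp only [latticePoint, ← h, AddMonoidHom.mk'_apply, Real.norm_eq_abs, sq_abs, Fin.sum_univ_two,
    Matrix.cons_val_zero, Matrix.cons_val_one, Matrix.cons_val_fin_one, Int.cast_add, Int.cast_pow,
    Int.cast_mul, Int.cast_ofNat]
  linear_combination (b ^ 2 * √11 ^ 2 + c ^ 2) / 144 * h₃ + (3 * b ^ 2 + d ^ 2) / 144 * h₁₁

theorem norm_latticePoint_eq_one_iff (a b c d : ℤ) : ‖latticePoint (a, b, c, d)‖ = 1 ↔
    a ^ 2 + 33 * b ^ 2 + 3 * c ^ 2 + 11 * d ^ 2 = 144 ∧ a * b + c * d = 0 := by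
  have h := intCast_add_intCast_mul_eq_zero_iff irrational_sqrt_thirtyThree
    (m := a ^ 2 + 33 * b ^ 2 + 3 * c ^ 2 + 11 * d ^ 2 - 144) (n := 2 * (a * b + c * d))
  rw [← sq_eq_sq₀ (norm_nonneg _) zero_le_one, norm_latticePoint_sq, one_pow,
    div_eq_one_iff_eq (by norm_num), ← sub_eq_zero, add_sub_right_comm]
  rw [sub_eq_zero, mul_eq_zero_iff_left two_ne_zero] at h
  exact_mod_cast h

theorem latticePoint_injective : Function.Injective latticePoint := by
  refine (injective_iff_map_eq_zero _).mpr fun ⟨a, b, c, d⟩ h => ?_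
  have hsq := norm_latticePoint_sq a b c d
  rw [h, norm_zero, zero_pow two_ne_zero, eq_comm, div_eq_zero_iff] at hsq
  obtain ⟨hsum, -⟩ := (intCast_add_intCast_mul_eq_zero_iff irrational_sqrt_thirtyThree).mp
    (hsq.resolve_right (by norm_num))
  obtain ⟨rfl, rfl, rfl, rfl⟩ : a = 0 ∧ b = 0 ∧ c = 0 ∧ d = 0 := by
    refine ⟨?_, ?_, ?_, ?_⟩ <;> rw [← sq_eq_zero_iff] <;>
      linarith [sq_nonneg a, sq_nonneg b, sq_nonneg c, sq_nonneg d]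
  rfl

theorem even_and_not_eight_dvd_of_norm_eq_one {a b c d : ℤ} (h : ‖latticePoint (a, b, c, d)‖ = 1) :
    Even (a + b) ∧ ¬ 8 ∣ a + b := by
  obtain ⟨h₁, h₂⟩ := (norm_latticePoint_eq_one_iff a b c d).mp h
  have box : ∀ b ∈ Finset.Icc (-2 : ℤ) 2, ∀ c ∈ Finset.Icc (-6 : ℤ) 6, ∀ d ∈ Finset.Icc (-3 : ℤ) 3,
      ∀ a ∈ Finset.Icc (-12 : ℤ) 12, a * b + c * d = 0 →
      a ^ 2 + 33 * b ^ 2 + 3 * c ^ 2 + 11 * d ^ 2 = 144 →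
        Even (a + b) ∧ ¬ 8 ∣ a + b := by decide +kernel
  refine box b ?_ c ?_ d ?_ a ?_ h₂ h₁ <;> rw [Finset.mem_Icc] <;> constructor <;> nlinarith

/-- The coloring of the lattice by `⌊(a + b) / 2⌋` modulo `4`. -/
def latticeColor (z : ℤ × ℤ × ℤ × ℤ) : ZMod 4 := ((z.1 + z.2.1) / 2 : ℤ)

theorem latticeColor_ne_of_dist_eq_one {z w : ℤ × ℤ × ℤ × ℤ}
    (h : dist (latticePoint z) (latticePoint w) = 1) : latticeColor z ≠ latticeColor w := by
  rw [dist_eq_norm, ← map_sub] at h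
  have := even_and_not_eight_dvd_of_norm_eq_one h
  rw [latticeColor, latticeColor, Ne, ZMod.intCast_eq_intCast_iff_dvd_sub]
  grind

theorem exists_coloring_range_latticePoint : ∃ c : Plane → ZMod 4,
    ∀ x ∈ Set.range latticePoint, ∀ y ∈ Set.range latticePoint, dist x y = 1 → c x ≠ c y := by
  refine ⟨Function.extend latticePoint latticeColor 0, ?_⟩
  rintro _ ⟨z, rfl⟩ _ ⟨w, rfl⟩ h
  rw [latticePoint_injective.extend_apply, latticePoint_injective.extend_apply]
  exact latticeColor_ne_of_dist_eq_one h

end Lattice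

section Search

/-- Evaluate `n` before `f`. It is `f n`, in a form that makes the kernel compute `n` first. -/
noncomputable def force {α : Type} (n : ℕ) (f : ℕ → α) : α :=
  Nat.rec (f 0) (fun m _ => f m.succ) n

theorem force_eq {α : Type} (n : ℕ) (f : ℕ → α) : force n f = f n := by
  cases n <;> rfl

/-- Case distinction on `m = 0`, as a recursor, which the kernel evaluates faster than `ite`. -/
noncomputable def ifZero {α : Type} (m : ℕ) (x y : α) : α :=
  Nat.rec x (fun _ _ => y) m

/-- The first nonzero one of two numbers, or `0`. -/
noncomputable def firstNonzero (m n : ℕ) : ℕ :=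
  ifZero m n m

theorem ifZero_land_shiftRight_one {α : Type} (m v : ℕ) (x y : α) :
    ifZero ((m.shiftRight v).land 1) x y = if m.testBit v then y else x := by
  have h : (m.shiftRight v).land 1 = (m.testBit v).toNat := by
    rw [Nat.toNat_testBit, ← Nat.shiftRight_eq_div_pow, ← Nat.and_one_is_mod]
    rfl
  rw [h]
  cases m.testBit v <;> rfl

/-- Try a color for the vertex `v`: trivially refuted if the bit `v` of `forbidden` is set, and
otherwise the color gets forbidden at the neighbors of `v` and the search goes on with `next`. -/
noncomputable def tryColor (neighbors : ℕ → ℕ) (forbidden v : ℕ) (next : ℕ → Bool) : Bool :=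
  ifZero ((forbidden.shiftRight v).land 1) (next (forbidden.lor (neighbors v))) true

/-- Depth-first refutation of `4`-colorings of a graph on natural numbers. The arguments `a b c d`
are the bit masks of the vertices at which the four colors are forbidden, `u` is the bit mask of the
vertices left to color, and `pivot a b c d u` is the vertex at which to branch. -/
noncomputable def refute (neighbors : ℕ → ℕ) (pivot : ℕ → ℕ → ℕ → ℕ → ℕ → ℕ) (fuel : ℕ) :
    ℕ → ℕ → ℕ → ℕ → ℕ → Bool :=
  Nat.rec (fun _ _ _ _ _ => false)
    (fun _ next a b c d u => force (pivot a b c d u) fun v =>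
      tryColor neighbors a v (fun a' => next a' b c d (u.xor (Nat.pow 2 v))) &&
      (tryColor neighbors b v (fun b' => next a b' c d (u.xor (Nat.pow 2 v))) &&
      (tryColor neighbors c v (fun c' => next a b c' d (u.xor (Nat.pow 2 v))) &&
      tryColor neighbors d v (fun d' => next a b c d' (u.xor (Nat.pow 2 v)))))) fuel

theorem refute_succ (neighbors : ℕ → ℕ) (pivot : ℕ → ℕ → ℕ → ℕ → ℕ → ℕ) (fuel a b c d u : ℕ) :
    refute neighbors pivot (fuel + 1) a b c d u =
      let v := pivot a b c d u
      let next := fun a b c d => refute neighbors pivot fuel a b c d (u.xor (Nat.pow 2 v))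
      tryColor neighbors a v (next · b c d) && (tryColor neighbors b v (next a · c d) &&
        (tryColor neighbors c v (next a b · d) && tryColor neighbors d v (next a b c ·))) := by
  simp only [refute, force_eq]

/-- The bit mask of the vertices at which the color `k` is forbidden by the `assignments` of colors
to vertices. -/
def forbiddenMask (neighbors : ℕ → ℕ) (assignments : List (ℕ × Fin 4)) (k : Fin 4) : ℕ :=
  assignments.foldr (fun e m => if e.2 = k then m.lor (neighbors e.1) else m) 0

/-- No vertex in the bit mask `m` has color `k`. -/
def Avoids (f : ℕ → Fin 4) (k : Fin 4) (m : ℕ) : Prop :=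
  ∀ w, m.testBit w → f w ≠ k

variable {neighbors : ℕ → ℕ} {f : ℕ → Fin 4} {k : Fin 4} {m v : ℕ}

theorem Avoids.lor_neighbors (hf : ∀ v w, (neighbors v).testBit w → f v ≠ f w)
    (hm : Avoids f k m) (hv : f v = k) : Avoids f k (m.lor (neighbors v)) := by
  intro w hw
  change (m ||| neighbors v).testBit w at hw
  rw [Nat.testBit_or, Bool.or_eq_true] at hw
  exact hw.elim (hm w) fun h => hv ▸ (hf v w h).symm

theorem avoids_forbiddenMask (hf : ∀ v w, (neighbors v).testBit w → f v ≠ f w)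
    {assignments : List (ℕ × Fin 4)} (h : ∀ e ∈ assignments, f e.1 = e.2) :
    Avoids f k (forbiddenMask neighbors assignments k) := by
  induction assignments with
  | nil => simp [Avoids, forbiddenMask]
  | cons e l ih =>
    obtain ⟨he, hl⟩ := List.forall_mem_cons.mp h
    rw [forbiddenMask, List.foldr_cons]
    split_ifs with hk
    · exact (ih hl).lor_neighbors hf (he.trans hk)
    · exact ih hl

theorem tryColor_eq_false {next : ℕ → Bool} (hf : ∀ v w, (neighbors v).testBit w → f v ≠ f w)
    (hm : Avoids f k m) (hv : f v = k)
    (hnext : ∀ m', Avoids f k m' → next m' = false) :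
    tryColor neighbors m v next = false := by
  rw [tryColor, ifZero_land_shiftRight_one, if_neg fun h => hm v h hv]
  exact hnext _ (hm.lor_neighbors hf hv)

theorem refute_eq_false (hf : ∀ v w, (neighbors v).testBit w → f v ≠ f w)
    (pivot : ℕ → ℕ → ℕ → ℕ → ℕ → ℕ) (fuel : ℕ) {a b c d : ℕ} (u : ℕ) (ha : Avoids f 0 a)
    (hb : Avoids f 1 b) (hc : Avoids f 2 c) (hd : Avoids f 3 d) :
    refute neighbors pivot fuel a b c d u = false := by
  induction fuel generalizing a b c d u with
  | zero => rfl
  | succ n ih =>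
    rw [refute_succ]
    generalize pivot a b c d u = v
    have hcolor : f v = 0 ∨ f v = 1 ∨ f v = 2 ∨ f v = 3 := by
      generalize f v = k
      revert k
      decide
    simp only [Bool.and_eq_false_iff]
    rcases hcolor with hv | hv | hv | hv
    · exact .inl (tryColor_eq_false hf ha hv fun _ h => ih _ h hb hc hd)
    · exact .inr (.inl (tryColor_eq_false hf hb hv fun _ h => ih _ ha h hc hd))
    · exact .inr (.inr (.inl (tryColor_eq_false hf hc hv fun _ h => ih _ ha hb h hd)))
    · exact .inr (.inr (.inr (tryColor_eq_false hf hd hv fun _ h => ih _ ha hb hc h)))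

/-- The index of the lowest set bit `2 ^ v` of `m`, for `v < 319`, from a table: `m ^^^ (m - 1)` is
`2 ^ (v + 1) - 1`, and these numbers are distinct modulo `347`, of which `2` is a primitive root. -/
def lowestBit (m : ℕ) : ℕ :=
  ((((List.range 319).foldl (fun s v => s + v <<< (9 * ((2 ^ (v + 1) - 1) % 347))) 0).shiftRight
    (Nat.mul 9 ((m.xor (m.sub 1)).mod 347)))).mod 512

/-- The DSATUR rule: the first uncolored vertex among those with the most forbidden colors.
Only the running time of the search depends on this choice. -/
noncomputable def dsaturPivot (a b c d u : ℕ) : ℕ :=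
  lowestBit (firstNonzero (u.land ((a.land b).land (c.land d))) (firstNonzero
    (u.land (((a.land b).land (c.lor d)).lor ((a.lor b).land (c.land d)))) (firstNonzero
    (u.land (((a.land b).lor (c.land d)).lor ((a.lor b).land (c.lor d))))
    (u.land ((a.lor b).lor (c.lor d))))))

end Search

section Graph

/-- The rational part of the inner product of two lattice points, times `144`: the inner product is
`(dot z w + cross z w * √33) / 144`. It is written with the functions, not the notation, of natural
number arithmetic, since the kernel evaluates it some hundred thousand times. -/
def dot (z w : ℕ × ℕ × ℕ × ℕ) : ℕ :=
  ((z.1.mul w.1).add ((z.2.1.mul w.2.1).mul 33)).add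
    (((z.2.2.1.mul w.2.2.1).mul 3).add ((z.2.2.2.mul w.2.2.2).mul 11))

/-- The coefficient of `√33` in the inner product of two lattice points, times `144`; see `dot`. -/
def cross (z w : ℕ × ℕ × ℕ × ℕ) : ℕ :=
  ((z.1.mul w.2.1).add (z.2.1.mul w.1)).add ((z.2.2.1.mul w.2.2.2).add (z.2.2.2.mul w.2.2.1))

/-- Decides whether two lattice points are at distance one: `|z - w|² = 1`, expanded bilinearly so
that no subtraction occurs. -/
def unitApart (z w : ℕ × ℕ × ℕ × ℕ) : Bool :=
  Nat.beq ((dot z z).add (dot w w)) (((dot z w).mul 2).add 144) &&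
    Nat.beq ((cross z z).add (cross w w)) ((cross z w).mul 2)

/-- `latticePoint` on natural coordinates, which the kernel handles faster than integers. -/
noncomputable def natPoint (z : ℕ × ℕ × ℕ × ℕ) : Plane :=
  latticePoint (z.1, z.2.1, z.2.2.1, z.2.2.2)

theorem natPoint_injective : Function.Injective natPoint := by
  rintro ⟨a, b, c, d⟩ ⟨a', b', c', d'⟩ h
  simpa using latticePoint_injective h

theorem unitApart_iff_dist_eq_one (z w : ℕ × ℕ × ℕ × ℕ) :
    unitApart z w ↔ dist (natPoint z) (natPoint w) = 1 := by
  obtain ⟨a, b, c, d⟩ := z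
  obtain ⟨a', b', c', d'⟩ := w
  rw [dist_eq_norm, natPoint, natPoint, ← map_sub]
  simp only [Prod.mk_sub_mk, norm_latticePoint_eq_one_iff, unitApart, dot, cross, Nat.beq_eq,
    Bool.and_eq_true, Nat.mul_eq, Nat.add_eq]
  zify
  refine and_congr ?_ ?_ <;> constructor <;> intro h <;> linarith

/-- The bit mask of the indices of the elements of a list that satisfy `p`. -/
def mask {α : Type*} (p : α → Bool) (l : List α) : ℕ :=
  l.rec 0 fun z _ m => (p z).toNat.add (m.mul 2)

theorem testBit_mask {α : Type*} (p : α → Bool) (l : List α) (w : ℕ) :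
    (mask p l).testBit w = (l[w]?).any p := by
  induction l generalizing w with
  | nil => simp [mask]
  | cons z l ih =>
    change ((p z).toNat + mask p l * 2).testBit w = _
    rw [add_comm, mul_comm, ← Nat.bit_val]
    cases w with
    | zero => simp
    | succ w => rw [Nat.testBit_bit_succ, ih, List.getElem?_cons_succ]

end Graph

section Vertices

/-- The coordinates of the 319 points of the graph. The first two are `p` and `q`, the third and
fourth form a unit triangle with `p`. -/
def vertices : List (ℕ × ℕ × ℕ × ℕ) :=
  [(1, 2, 9, 4), (29, 2, 9, 4), (13, 2, 9, 4), (7, 2, 15, 4), (9, 2, 15, 6), (11, 2, 7, 4),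
   (18, 1, 4, 3), (18, 3, 14, 3), (3, 2, 9, 6), (18, 1, 8, 3), (9, 2, 7, 6), (18, 3, 10, 3),
   (12, 3, 12, 3), (18, 1, 12, 3), (14, 3, 4, 1), (21, 2, 11, 6), (20, 1, 12, 5), (18, 3, 6, 3),
   (12, 3, 4, 3), (6, 3, 10, 3), (21, 2, 7, 6), (14, 3, 8, 5), (9, 2, 9, 8), (12, 1, 10, 3),
   (15, 2, 5, 6), (6, 1, 8, 3), (11, 2, 11, 4), (14, 1, 10, 5), (12, 1, 14, 3), (23, 2, 11, 4),
   (10, 3, 12, 5), (10, 3, 8, 5), (14, 3, 14, 7), (19, 2, 7, 4), (14, 1, 4, 7), (13, 2, 5, 4),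
   (25, 2, 9, 4), (17, 0, 11, 4), (7, 2, 11, 4), (11, 2, 15, 4), (10, 3, 10, 7), (12, 1, 6, 3),
   (14, 1, 12, 7), (15, 2, 9, 2), (19, 2, 3, 4), (15, 2, 13, 6), (21, 4, 5, 6), (13, 2, 7, 2),
   (15, 2, 9, 6), (24, 3, 12, 3), (17, 4, 7, 4), (23, 2, 7, 4), (22, 3, 10, 3), (10, 1, 8, 3),
   (19, 2, 13, 2), (22, 1, 14, 5), (9, 2, 11, 6), (10, 1, 12, 7), (8, 1, 10, 7), (14, 3, 12, 1),
   (5, 2, 11, 2), (9, 2, 9, 4), (19, 4, 9, 4), (18, 1, 6, 5), (17, 2, 15, 6), (20, 1, 12, 1),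
   (23, 2, 7, 8), (15, 2, 1, 6), (20, 3, 10, 5), (23, 2, 3, 4), (5, 2, 13, 4), (8, 3, 10, 5),
   (4, 1, 12, 5), (18, 3, 18, 3), (10, 3, 16, 5), (17, 2, 5, 4), (7, 0, 9, 4), (4, 1, 6, 7),
   (16, 1, 8, 5), (16, 3, 12, 3), (16, 3, 8, 3), (16, 3, 10, 5), (16, 3, 6, 5), (20, 3, 12, 7),
   (8, 1, 6, 7), (5, 2, 9, 4), (14, 1, 14, 5), (10, 1, 6, 1), (18, 5, 8, 3), (4, 3, 6, 5),
   (13, 2, 11, 6), (16, 1, 10, 3), (11, 2, 13, 2), (12, 1, 8, 5), (20, 3, 4, 7), (2, 3, 10, 3),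
   (20, 3, 6, 5), (17, 2, 11, 2), (8, 1, 8, 5), (13, 4, 15, 4), (15, 0, 3, 6), (8, 3, 6, 5),
   (26, 1, 14, 5), (12, 3, 10, 5), (8, 1, 12, 1), (16, 3, 6, 1), (24, 3, 8, 3), (23, 2, 5, 2),
   (16, 1, 12, 1), (16, 1, 4, 5), (14, 1, 8, 7), (11, 2, 9, 6), (26, 3, 12, 5), (25, 2, 11, 2),
   (22, 1, 8, 7), (17, 0, 7, 4), (14, 3, 10, 7), (22, 3, 8, 5), (17, 4, 11, 4), (9, 2, 7, 2),
   (19, 0, 9, 4), (25, 2, 11, 6), (23, 0, 9, 4), (22, 3, 4, 5), (22, 1, 10, 5), (11, 4, 9, 4),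
   (13, 2, 13, 4), (21, 0, 9, 6), (18, 3, 12, 5), (4, 1, 4, 5), (16, 1, 6, 3), (10, 1, 8, 7),
   (8, 1, 10, 3), (22, 1, 12, 3), (21, 2, 9, 8), (10, 1, 12, 3), (15, 2, 11, 8), (12, 1, 18, 3),
   (8, 3, 8, 3), (14, 3, 10, 3), (17, 0, 13, 2), (22, 1, 6, 5), (8, 3, 8, 7), (13, 2, 3, 2),
   (19, 2, 11, 4), (7, 2, 3, 4), (14, 3, 4, 5), (27, 2, 5, 6), (7, 2, 7, 4), (23, 4, 5, 4),
   (23, 2, 15, 4), (24, 3, 4, 3), (12, 3, 0, 3), (18, 3, 8, 5), (9, 2, 3, 6), (13, 2, 17, 4),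
   (13, 0, 5, 2), (14, 1, 6, 5), (6, 3, 8, 5), (4, 3, 14, 5), (15, 2, 11, 4), (10, 1, 10, 5),
   (17, 2, 7, 2), (12, 3, 16, 3), (17, 2, 9, 4), (15, 2, 13, 2), (17, 2, 13, 4), (8, 1, 8, 1),
   (13, 4, 13, 2), (19, 2, 15, 4), (22, 1, 8, 3), (10, 3, 14, 3), (14, 3, 12, 5), (13, 0, 7, 4),
   (19, 2, 9, 6), (16, 1, 12, 5), (21, 2, 7, 2), (13, 0, 15, 4), (14, 3, 6, 7), (10, 3, 10, 3),
   (8, 3, 10, 1), (19, 2, 9, 2), (17, 0, 3, 4), (21, 2, 9, 0), (13, 2, 15, 2), (21, 2, 15, 6),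
   (25, 2, 13, 4), (21, 2, 9, 4), (18, 1, 10, 5), (26, 1, 10, 5), (13, 2, 11, 2), (20, 3, 8, 7),
   (12, 3, 8, 3), (14, 3, 8, 1), (7, 2, 9, 2), (20, 1, 16, 5), (13, 2, 7, 6), (16, 3, 4, 7),
   (15, 0, 7, 6), (9, 4, 9, 6), (16, 1, 6, 7), (16, 3, 12, 7), (28, 1, 12, 5), (22, 3, 12, 5),
   (19, 2, 5, 2), (20, 1, 8, 1), (9, 0, 9, 6), (24, 1, 10, 3), (26, 3, 10, 7), (3, 2, 5, 6),
   (15, 0, 11, 6), (12, 1, 12, 5), (10, 1, 6, 5), (4, 3, 12, 7), (21, 0, 13, 6), (24, 1, 14, 3),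
   (16, 3, 8, 7), (7, 0, 5, 4), (10, 1, 4, 7), (6, 1, 16, 3), (13, 2, 15, 6), (4, 3, 10, 5),
   (9, 2, 9, 0), (21, 4, 9, 6), (9, 0, 5, 6), (28, 1, 10, 3), (17, 4, 15, 4), (9, 4, 13, 6),
   (24, 3, 16, 3), (18, 1, 0, 3), (24, 1, 6, 3), (10, 1, 10, 1), (5, 2, 11, 6), (7, 2, 5, 2),
   (13, 4, 3, 4), (11, 2, 7, 8), (27, 2, 13, 6), (11, 2, 9, 2), (16, 1, 14, 7), (16, 1, 14, 3),
   (11, 4, 13, 4), (22, 3, 10, 7), (17, 2, 17, 4), (20, 1, 4, 5), (7, 4, 13, 4), (6, 3, 6, 3),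
   (15, 2, 7, 0), (28, 3, 10, 5), (6, 1, 4, 3), (6, 1, 12, 3), (18, 3, 2, 3), (11, 0, 9, 4),
   (22, 3, 8, 1), (12, 1, 2, 3), (23, 2, 9, 2), (26, 1, 8, 7), (11, 2, 3, 4), (15, 2, 17, 6),
   (8, 3, 12, 7), (19, 0, 5, 4), (20, 1, 6, 7), (20, 1, 8, 5), (16, 1, 10, 7), (5, 2, 7, 2),
   (18, 1, 16, 3), (15, 4, 15, 6), (13, 0, 11, 4), (10, 3, 14, 7), (20, 3, 6, 1), (16, 3, 14, 5),
   (23, 4, 9, 4), (17, 4, 5, 2), (4, 1, 10, 7), (21, 2, 3, 6), (5, 2, 5, 4), (10, 3, 8, 1),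
   (3, 2, 13, 6), (8, 1, 4, 5), (14, 1, 6, 1), (16, 1, 4, 1), (7, 2, 13, 2), (10, 3, 6, 7),
   (25, 2, 5, 4), (8, 1, 12, 5), (19, 2, 11, 8), (14, 1, 14, 1), (23, 4, 13, 4), (15, 4, 11, 6),
   (16, 3, 14, 1), (13, 2, 5, 8), (19, 4, 13, 4), (17, 2, 3, 2), (4, 3, 8, 7), (6, 3, 14, 3),
   (20, 1, 10, 7), (11, 4, 5, 4), (15, 4, 7, 6), (20, 3, 14, 5), (7, 4, 9, 4), (13, 4, 7, 4),
   (26, 3, 8, 5), (22, 1, 12, 7), (23, 2, 13, 2), (20, 3, 10, 1), (0, 3, 8, 3), (8, 1, 16, 5),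
   (10, 3, 4, 5), (15, 2, 11, 0), (11, 0, 13, 4), (10, 1, 14, 5), (14, 3, 14, 3), (22, 1, 6, 1),
   (2, 3, 8, 5), (2, 1, 10, 5), (17, 2, 15, 2), (0, 1, 10, 3), (11, 2, 5, 2), (8, 3, 14, 5),
   (27, 2, 9, 6)]

/-- The coordinates of the vertex number `v`, with `p` as the default for `319 ≤ v`. -/
def vertex (v : ℕ) : ℕ × ℕ × ℕ × ℕ :=
  vertices.getD v (1, 2, 9, 4)

/-- The bit mask of the neighbors of the vertex number `v`. -/
def neighborMask (v : ℕ) : ℕ :=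
  mask (unitApart (vertex v)) vertices

/-- The vertex set of the graph. -/
def graphPoints : Set Plane :=
  natPoint '' {z | z ∈ vertices}

/-- The assignments of colors to vertex numbers with which the search starts: color `0` at `p` and
`q`, colors `1` and `2` on the triangle, and the color `k` at one more vertex, in order to split the
search into four parts. -/
def precoloring (k : Fin 4) : List (ℕ × Fin 4) :=
  [(0, 0), (1, 0), (2, 1), (3, 2), (4, k)]

/-- Whether the search refutes all proper colorings that extend `precoloring k`. The fuel `314` is
the number of vertices that `precoloring k` leaves uncolored. -/
noncomputable def refutePrecoloring (k : Fin 4) : Bool :=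
  refute neighborMask dsaturPivot 314 (forbiddenMask neighborMask (precoloring k) 0)
    (forbiddenMask neighborMask (precoloring k) 1) (forbiddenMask neighborMask (precoloring k) 2)
    (forbiddenMask neighborMask (precoloring k) 3) (2 ^ 319 - 2 ^ 5)

theorem length_vertices : vertices.length = 319 := by decide +kernel

theorem nodup_vertices : vertices.Nodup := by decide +kernel

theorem vertex_mem_vertices (v : ℕ) : vertex v ∈ vertices := by
  rw [vertex, List.getD_eq_getElem?_getD]
  cases h : vertices[v]? with
  | none => exact List.mem_cons_self
  | some z => exact List.mem_of_getElem? h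

theorem natPoint_vertex_mem_graphPoints (v : ℕ) : natPoint (vertex v) ∈ graphPoints :=
  Set.mem_image_of_mem _ (vertex_mem_vertices v)

theorem ncard_graphPoints : graphPoints.ncard = 319 := by
  have h : {z | z ∈ vertices} = (vertices.toFinset : Set (ℕ × ℕ × ℕ × ℕ)) := by
    ext; simp
  rw [graphPoints, Set.ncard_image_of_injective _ natPoint_injective, h, Set.ncard_coe_finset,
    List.toFinset_card_of_nodup nodup_vertices, length_vertices]

theorem graphPoints_subset_range_latticePoint : graphPoints ⊆ Set.range latticePoint := by
  rintro _ ⟨z, -, rfl⟩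
  exact Set.mem_range_self _

theorem dist_natPoint_vertex_zero_one :
    dist (natPoint (vertex 0)) (natPoint (vertex 1)) = 7 / 3 := by
  have h : natPoint (vertex 0) - natPoint (vertex 1) = latticePoint (-28, 0, 0, 0) := by
    rw [natPoint, natPoint, ← map_sub]
    rfl
  rw [dist_eq_norm, h, ← sq_eq_sq₀ (norm_nonneg _) (by norm_num), norm_latticePoint_sq]
  norm_num

theorem dist_eq_one_of_testBit_neighborMask {v w : ℕ} (h : (neighborMask v).testBit w) :
    dist (natPoint (vertex v)) (natPoint (vertex w)) = 1 := by
  rw [neighborMask, testBit_mask, Option.any_eq_true] at h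
  obtain ⟨z, hz, hvz⟩ := h
  rw [← unitApart_iff_dist_eq_one, vertex, vertex, List.getD_eq_getElem?_getD (i := w), hz]
  exact hvz

theorem exists_perm_fin_four {i j k : Fin 4} (hij : i ≠ j) (hjk : j ≠ k) (hki : k ≠ i) :
    ∃ σ : Equiv.Perm (Fin 4), σ i = 0 ∧ σ j = 1 ∧ σ k = 2 := by
  revert i j k
  decide +kernel

set_option maxHeartbeats 0 in
-- The search has about 378,000 nodes.
theorem refutePrecoloring_eq_true : ∀ k, refutePrecoloring k = true
  | 0 => by decide +kernel
  | 1 => by decide +kernel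
  | 2 => by decide +kernel
  | 3 => by decide +kernel

theorem color_vertex_zero_ne_color_vertex_one {c : Plane → Fin 4}
    (hc : ∀ x ∈ graphPoints, ∀ y ∈ graphPoints, dist x y = 1 → c x ≠ c y) :
    c (natPoint (vertex 0)) ≠ c (natPoint (vertex 1)) := by
  intro hpq
  have hadj {v w : ℕ} (h : (neighborMask v).testBit w) :
      c (natPoint (vertex v)) ≠ c (natPoint (vertex w)) :=
    hc _ (natPoint_vertex_mem_graphPoints v) _ (natPoint_vertex_mem_graphPoints w)
      (dist_eq_one_of_testBit_neighborMask h)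
  obtain ⟨σ, hp, h₂, h₃⟩ := exists_perm_fin_four
    (hadj (v := 0) (w := 2) (by decide +kernel)) (hadj (v := 2) (w := 3) (by decide +kernel))
    (hadj (v := 3) (w := 0) (by decide +kernel))
  let f (v : ℕ) : Fin 4 := σ (c (natPoint (vertex v)))
  have hf (v w : ℕ) (h : (neighborMask v).testBit w) : f v ≠ f w := σ.injective.ne (hadj h)
  have hpre : ∀ e ∈ precoloring (f 4), f e.1 = e.2 := by
    simp [precoloring, f, ← hpq, hp, h₂, h₃]
  have hm (k : Fin 4) : Avoids f k (forbiddenMask neighborMask (precoloring (f 4)) k) :=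
    avoids_forbiddenMask hf hpre
  have hfalse : refutePrecoloring (f 4) = false :=
    refute_eq_false hf _ _ _ (hm 0) (hm 1) (hm 2) (hm 3)
  exact Bool.false_ne_true (hfalse.symm.trans (refutePrecoloring_eq_true _))

end Vertices

theorem stmt_5 :
    ∃ S : Set (EuclideanSpace ℝ (Fin 2)), S.Finite ∧ S.ncard = 319 ∧
      ∃ p ∈ S, ∃ q ∈ S, dist p q = 7 / 3 ∧
        (∃ c : EuclideanSpace ℝ (Fin 2) → Fin 4, (∀ x ∈ S, ∀ y ∈ S, dist x y = 1 → c x ≠ c y)) ∧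
        (∀ c : EuclideanSpace ℝ (Fin 2) → Fin 4, (∀ x ∈ S, ∀ y ∈ S, dist x y = 1 → c x ≠ c y) → c p ≠ c q) := by
  obtain ⟨c, hc⟩ := exists_coloring_range_latticePoint
  exact ⟨graphPoints, List.finite_toSet vertices |>.image natPoint, ncard_graphPoints,
    _, natPoint_vertex_mem_graphPoints 0, _, natPoint_vertex_mem_graphPoints 1,
    dist_natPoint_vertex_zero_one,
    ⟨c, fun x hx y hy => hc x (graphPoints_subset_range_latticePoint hx) y
      (graphPoints_subset_range_latticePoint hy)⟩,
    fun _ => color_vertex_zero_ne_color_vertex_one⟩
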